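/- arXiv:2001.02751 — 2 statements merged into one kernel-verified Lean document; each statement's English description precedes it below -/
import Mathlib

section
/- Let X be a compact metric space and M a monoid acting on X by continuous surjective maps, with Ellis semigroup E(X,M). The system is distal (x and y proximal implies x = y) if and only if E(X,M) is a group, i.e., every f ∈ E(X,M) has some g ∈ E(X,M) with f ∘ g = g ∘ f = id. -/
/-!
By compactness, `x` and `y` are proximal exactly when some element of the Ellis semigroup `E`
identifies them, so the system is distal iff every element of `E` is injective. If this holds and
`f ∈ E`, the compact semigroup `E ∘ f` contains an idempotent `g ∘ f` by the Ellis–Numakura lemma.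
An injective idempotent is the identity, so `g` is a left inverse of `f`, and since `g` is itself
injective it is a two-sided inverse.
-/

open Function Set Topology Uniformity

section SelfMaps

variable {X : Type*} [TopologicalSpace X]

-- Only `f ↦ f ∘ g` is continuous for every `g`, so the closure is taken first in the right factor,
-- where the left one is still a continuous map from `S`, and then in the left factor.
theorem comp_mem_closure {S : Set (X → X)} (hcont : ∀ f ∈ S, Continuous f)
    (hcomp : ∀ f ∈ S, ∀ g ∈ S, f ∘ g ∈ S) {f g : X → X} (hf : f ∈ closure S)
    (hg : g ∈ closure S) : f ∘ g ∈ closure S := by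
  have comp_mem_of_mem_left : ∀ s ∈ S, s ∘ g ∈ closure S := fun s hs ↦
    map_mem_closure (Pi.continuous_postcomp (hcont s hs)) hg (hcomp s hs)
  simpa only [closure_closure] using
    map_mem_closure (Pi.continuous_precomp g) hf comp_mem_of_mem_left

variable [T2Space X] {E : Set (X → X)}

theorem exists_comp_self_eq_of_isCompact (hne : E.Nonempty) (hE : IsCompact E)
    (hcomp : ∀ f ∈ E, ∀ g ∈ E, f ∘ g ∈ E) : ∃ u ∈ E, u ∘ u = u :=
  letI : Semigroup (X → X) := { mul := (· ∘ ·), mul_assoc := fun _ _ _ ↦ rfl }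
  exists_idempotent_in_compact_subsemigroup Pi.continuous_precomp E hne hE hcomp

theorem exists_comp_idempotent_of_isCompact (hE : IsCompact E)
    (hcomp : ∀ f ∈ E, ∀ g ∈ E, f ∘ g ∈ E) {f : X → X} (hf : f ∈ E) :
    ∃ g ∈ E, (g ∘ f) ∘ (g ∘ f) = g ∘ f := by
  have comp_mem_image : ∀ a ∈ (· ∘ f) '' E, ∀ b ∈ (· ∘ f) '' E, a ∘ b ∈ (· ∘ f) '' E := by
    rintro _ ⟨a, ha, rfl⟩ _ ⟨b, hb, rfl⟩
    exact ⟨(a ∘ f) ∘ b, hcomp _ (hcomp a ha f hf) b hb, rfl⟩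
  obtain ⟨_, ⟨g, hg, rfl⟩, hidem⟩ := exists_comp_self_eq_of_isCompact
    (Nonempty.image _ ⟨f, hf⟩) (hE.image (Pi.continuous_precomp f)) comp_mem_image
  exact ⟨g, hg, hidem⟩

theorem forall_injective_iff_forall_exists_inverse (hE : IsCompact E)
    (hcomp : ∀ f ∈ E, ∀ g ∈ E, f ∘ g ∈ E) :
    (∀ f ∈ E, Injective f) ↔ ∀ f ∈ E, ∃ g ∈ E, f ∘ g = id ∧ g ∘ f = id := by
  constructor
  · intro hinj f hf
    obtain ⟨g, hg, hidem⟩ := exists_comp_idempotent_of_isCompact hE hcomp hf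
    have hgf : g ∘ f = id := (hinj _ (hcomp g hg f hf)).comp_left hidem
    have hfg : f ∘ g = id :=
      ((leftInverse_iff_comp.2 hgf).rightInverse_of_injective (hinj g hg)).comp_eq_id
    exact ⟨g, hg, hfg, hgf⟩
  · intro hinv f hf
    obtain ⟨g, -, -, hgf⟩ := hinv f hf
    exact (leftInverse_iff_comp.2 hgf).injective

end SelfMaps

section Ellis

variable {X M : Type*}

/-- The Ellis semigroup of a family of self-maps: its closure in the topology of pointwise
convergence, which is the topology carried by the Pi type `X → X`. -/
def ellisSemigroup [TopologicalSpace X] (α : M → X → X) : Set (X → X) :=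
  closure (range α)

theorem isCompact_ellisSemigroup [TopologicalSpace X] [CompactSpace X] (α : M → X → X) :
    IsCompact (ellisSemigroup α) :=
  isClosed_closure.isCompact

/-- Two points are proximal for a family of self-maps if some member of the family brings them
arbitrarily close together, closeness being measured by entourages. -/
def IsProximal [UniformSpace X] (α : M → X → X) (x y : X) : Prop :=
  ∀ V ∈ 𝓤 X, ∃ t, (α t x, α t y) ∈ V

/-- A family of self-maps is distal if proximal points are equal. -/
def IsDistal [UniformSpace X] (α : M → X → X) : Prop :=
  ∀ x y, IsProximal α x y → x = y

theorem isProximal_iff_dist [PseudoMetricSpace X] {α : M → X → X} {x y : X} :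
    IsProximal α x y ↔ ∀ ε > 0, ∃ t, dist (α t x) (α t y) < ε := by
  refine ⟨fun h ε hε ↦ h _ (Metric.dist_mem_uniformity hε), fun h V hV ↦ ?_⟩
  obtain ⟨ε, hε, hεV⟩ := Metric.mem_uniformity_dist.1 hV
  exact (h ε hε).imp fun _ ht ↦ hεV ht

theorem isProximal_of_mem_ellisSemigroup [UniformSpace X] {α : M → X → X} {f : X → X}
    (hf : f ∈ ellisSemigroup α) {x y : X} (hxy : f x = f y) : IsProximal α x y := by
  intro V hV
  have hev : Continuous fun g : X → X ↦ (g x, g y) :=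
    (continuous_apply x).prodMk (continuous_apply y)
  have hV_nhds : V ∈ 𝓝 (f x, f y) := hxy ▸ nhds_le_uniformity (f x) hV
  obtain ⟨_, hgV, t, rfl⟩ := mem_closure_iff_nhds.1 hf _ (hev.continuousAt hV_nhds)
  exact ⟨t, hgV⟩

variable [UniformSpace X] [CompactSpace X] [T2Space X]

theorem IsProximal.exists_mem_ellisSemigroup {α : M → X → X} {x y : X} (h : IsProximal α x y) :
    ∃ f ∈ ellisSemigroup α, f x = f y := by
  by_contra! hne
  let K : Set (X × X) := (fun f : X → X ↦ (f x, f y)) '' ellisSemigroup α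
  have hK_closed : IsClosed K :=
    ((isCompact_ellisSemigroup α).image
      ((continuous_apply x).prodMk (continuous_apply y))).isClosed
  have hdiag : diagonal X ⊆ Kᶜ := by
    rintro ⟨a, b⟩ hab ⟨f, hf, hfab⟩
    obtain ⟨rfl, rfl⟩ := Prod.mk.inj hfab
    exact hne f hf hab
  have hK_compl : Kᶜ ∈ 𝓤 X :=
    nhdsSet_diagonal_eq_uniformity (α := X) ▸ hK_closed.isOpen_compl.mem_nhdsSet.2 hdiag
  obtain ⟨t, ht⟩ := h _ hK_compl
  exact ht ⟨α t, subset_closure (mem_range_self t), rfl⟩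

theorem isDistal_iff_forall_injective {α : M → X → X} :
    IsDistal α ↔ ∀ f ∈ ellisSemigroup α, Injective f := by
  refine ⟨fun h f hf x y hxy ↦ h x y (isProximal_of_mem_ellisSemigroup hf hxy),
    fun hinj x y hxy ↦ ?_⟩
  obtain ⟨f, hf, hfxy⟩ := hxy.exists_mem_ellisSemigroup
  exact hinj f hf hfxy

theorem stmt_5_general [Mul M] {α : M → X → X} (hmul : ∀ s t, α (s * t) = α s ∘ α t)
    (hcont : ∀ t, Continuous (α t)) :
    IsDistal α ↔
      ∀ f ∈ ellisSemigroup α, ∃ g ∈ ellisSemigroup α, f ∘ g = id ∧ g ∘ f = id := by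
  have comp_mem_range : ∀ f ∈ range α, ∀ g ∈ range α, f ∘ g ∈ range α := by
    rintro _ ⟨s, rfl⟩ _ ⟨t, rfl⟩
    exact ⟨s * t, hmul s t⟩
  have comp_mem_ellisSemigroup :
      ∀ f ∈ ellisSemigroup α, ∀ g ∈ ellisSemigroup α, f ∘ g ∈ ellisSemigroup α :=
    fun _ hf _ hg ↦ comp_mem_closure (forall_mem_range.2 hcont) comp_mem_range hf hg
  exact isDistal_iff_forall_injective.trans
    (forall_injective_iff_forall_exists_inverse (isCompact_ellisSemigroup α)
      comp_mem_ellisSemigroup)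

end Ellis

/-- A monoid action on a compact metric space by continuous surjections is
distal (proximal pairs are equal) iff its Ellis semigroup is a group, i.e. every element
has a two-sided compositional inverse in the Ellis semigroup. -/
theorem stmt_5 {X M : Type*} [MetricSpace X] [CompactSpace X] [Monoid M]
    (α : M → X → X)
    (hone : α 1 = id)
    (hmul : ∀ s t : M, α (s * t) = α s ∘ α t)
    (hcont : ∀ t : M, Continuous (α t))
    (hsurj : ∀ t : M, Function.Surjective (α t)) :
    (∀ x y : X, (∀ ε > 0, ∃ t : M, dist (α t x) (α t y) < ε) → x = y) ↔
      (∀ f ∈ closure (Set.range α), ∃ g ∈ closure (Set.range α),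
        f ∘ g = id ∧ g ∘ f = id) := by
  simpa only [IsDistal, isProximal_iff_dist, ellisSemigroup] using stmt_5_general hmul hcont
end

section
/- Let X be a compact metric space and α : X → X a homeomorphism such that the forward proximality relation and the backward proximality relation are both transitive. Let E, E⁺, E⁻ be the closures of {α^n : n ∈ ℤ}, {α^n : n ≥ 0}, {α^n : n ≤ 0} in the self-maps of X with the product topology, and let M, M⁺, M⁻ denote their kernels (smallest two-sided ideals). Then exactly one of the following two alternatives holds: (1) proximality is transitive, E has a unique minimal left ideal, and M = M⁺ = M⁻; or (2) proximality is not transitive, M⁺ ∩ M⁻ = ∅, and M⁺ and M⁻ are precisely the minimal left ideals of E (so E has exactly two minimal left ideals). -/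
/-- The `n`-th power (`n : ℤ`) of a homeomorphism `α`, as a self-map. -/
def zIter {X : Type*} [TopologicalSpace X] (α : X ≃ₜ X) (n : ℤ) : X → X :=
  if 0 ≤ n then (⇑α)^[n.toNat] else (⇑α.symm)^[(-n).toNat]

/-- A left ideal of the subsemigroup `S` of self-maps of `X` (under composition). -/
def IsLeftIdealIn {X : Type*} (S L : Set (X → X)) : Prop :=
  L.Nonempty ∧ L ⊆ S ∧ ∀ f ∈ S, ∀ g ∈ L, f ∘ g ∈ L

/-- A minimal left ideal of `S`. -/
def IsMinLeftIdealIn {X : Type*} (S L : Set (X → X)) : Prop :=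
  IsLeftIdealIn S L ∧ ∀ L' : Set (X → X), IsLeftIdealIn S L' → L' ⊆ L → L' = L

/-- A two-sided ideal of the subsemigroup `S` of self-maps of `X`. -/
def IsIdealIn {X : Type*} (S I : Set (X → X)) : Prop :=
  I.Nonempty ∧ I ⊆ S ∧ ∀ f ∈ S, ∀ g ∈ I, f ∘ g ∈ I ∧ g ∘ f ∈ I

/-- The kernel of `S`: the smallest two-sided ideal of `S`. -/
def IsKernelOf {X : Type*} (S K : Set (X → X)) : Prop :=
  IsIdealIn S K ∧ ∀ I : Set (X → X), IsIdealIn S I → K ⊆ I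

/-- Proximality for the `ℤ`-action generated by the homeomorphism `α`. -/
def ZProx {X : Type*} [MetricSpace X] (α : X ≃ₜ X) (x y : X) : Prop :=
  ∀ ε > 0, ∃ n : ℤ, dist (zIter α n x) (zIter α n y) < ε

/-!
For a compact right-topological semigroup `S` of self-maps, say that `x` and `y` are identified by
`S` if `p x = p y` for some `p ∈ S`; for `S = closure T` this is proximality under `T`. The relation
is transitive iff `S` has a unique minimal left ideal, which is then the kernel of `S`. The
reason is that an idempotent `u` of `S` identifies `u x` with `x`, whereas `S` never identifies two
distinct points in the image of a member of a minimal left ideal.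

Applied to `E⁺` and `E⁻`, the hypotheses say that `M⁺` and `M⁻` are their unique minimal left
ideals. Since `E⁺` commutes with `α`, the set `α ∘ M⁺` is again a left ideal of `E⁺`, so it equals
`M⁺`, which is therefore stable under `α⁻¹` and is a minimal left ideal of `E`; likewise for `M⁻`.
As `E = E⁺ ∪ E⁻`, every minimal left ideal of `E` meets `E⁺` or `E⁻`, hence is `M⁺` or `M⁻`, and
the two alternatives are `M⁺ = M⁻` and `M⁺ ≠ M⁻`.
-/

open Set Topology Uniformity

section Ideals

variable {X : Type*} {S E L L' K : Set (X → X)} {g : X → X}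

/-- `S` is a subsemigroup of the self-maps of `X` under composition. -/
def IsCompClosed (S : Set (X → X)) : Prop :=
  ∀ f ∈ S, ∀ g ∈ S, f ∘ g ∈ S

theorem IsCompClosed.isLeftIdealIn_self (hS : IsCompClosed S) (hne : S.Nonempty) :
    IsLeftIdealIn S S :=
  ⟨hne, subset_rfl, hS⟩

theorem IsLeftIdealIn.image_comp_right (hL : IsLeftIdealIn S L) (hS : IsCompClosed S)
    (hg : g ∈ S) : IsLeftIdealIn S ((· ∘ g) '' L) := by
  refine ⟨hL.1.image _, ?_, ?_⟩
  · rintro _ ⟨l, hl, rfl⟩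
    exact hS l (hL.2.1 hl) g hg
  · rintro f hf _ ⟨l, hl, rfl⟩
    exact ⟨f ∘ l, hL.2.2 f hf l hl, rfl⟩

theorem IsLeftIdealIn.image_comp_right_subset (hL : IsLeftIdealIn S L) (hg : g ∈ L) :
    (· ∘ g) '' S ⊆ L := by
  rintro _ ⟨f, hf, rfl⟩
  exact hL.2.2 f hf g hg

theorem IsLeftIdealIn.inter (hL : IsLeftIdealIn S L) (hL' : IsLeftIdealIn S L')
    (hne : (L ∩ L').Nonempty) : IsLeftIdealIn S (L ∩ L') :=
  ⟨hne, inter_subset_left.trans hL.2.1, fun f hf g hg ↦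
    ⟨hL.2.2 f hf g hg.1, hL'.2.2 f hf g hg.2⟩⟩

theorem IsLeftIdealIn.inter_subsemigroup (hL : IsLeftIdealIn E L) (hS : IsCompClosed S)
    (hSE : S ⊆ E) (hne : (L ∩ S).Nonempty) : IsLeftIdealIn S (L ∩ S) :=
  ⟨hne, inter_subset_right, fun f hf g hg ↦ ⟨hL.2.2 f (hSE hf) g hg.1, hS f hf g hg.2⟩⟩

theorem IsMinLeftIdealIn.image_comp_right_eq (hL : IsMinLeftIdealIn S L) (hS : IsCompClosed S)
    (hL' : IsLeftIdealIn S L') (hg : g ∈ L) : (· ∘ g) '' L' = L :=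
  hL.2 _ (hL'.image_comp_right hS (hL.1.2.1 hg))
    ((image_mono hL'.2.1).trans (hL.1.image_comp_right_subset hg))

theorem IsMinLeftIdealIn.eq_of_inter_nonempty (hL : IsMinLeftIdealIn S L)
    (hL' : IsMinLeftIdealIn S L') (hne : (L ∩ L').Nonempty) : L = L' := by
  have hinter : IsLeftIdealIn S (L ∩ L') := hL.1.inter hL'.1 hne
  rw [← hL.2 _ hinter inter_subset_left, hL'.2 _ hinter inter_subset_right]

theorem IsMinLeftIdealIn.image_comp_right (hL : IsMinLeftIdealIn S L) (hS : IsCompClosed S)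
    (hg : g ∈ S) : IsMinLeftIdealIn S ((· ∘ g) '' L) := by
  refine ⟨hL.1.image_comp_right hS hg, fun L' hL' hsub ↦ hsub.antisymm ?_⟩
  have hpreimage : {l ∈ L | l ∘ g ∈ L'} = L := by
    refine hL.2 _ ⟨?_, (sep_subset _ _).trans hL.1.2.1, ?_⟩ (sep_subset _ _)
    · obtain ⟨k, hk⟩ := hL'.1
      obtain ⟨l, hl, rfl⟩ := hsub hk
      exact ⟨l, hl, hk⟩
    · rintro f hf l ⟨hl, hlg⟩
      exact ⟨hL.1.2.2 f hf l hl, hL'.2.2 f hf _ hlg⟩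
  rintro _ ⟨l, hl, rfl⟩
  exact (hpreimage.ge hl).2

theorem IsMinLeftIdealIn.image_comp_left_eq (hL : IsMinLeftIdealIn S L) (hg : g ∈ S)
    (hcomm : ∀ f ∈ S, f ∘ g = g ∘ f) : (g ∘ ·) '' L = L := by
  have hsub : (g ∘ ·) '' L ⊆ L := by
    rintro _ ⟨l, hl, rfl⟩
    exact hL.1.2.2 g hg l hl
  refine hL.2 _ ⟨hL.1.1.image _, hsub.trans hL.1.2.1, ?_⟩ hsub
  rintro f hf _ ⟨l, hl, rfl⟩
  exact ⟨f ∘ l, hL.1.2.2 f hf l hl, congrArg (· ∘ l) (hcomm f hf).symm⟩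

theorem IsMinLeftIdealIn.of_subset (hK : IsMinLeftIdealIn S K) (hSE : S ⊆ E)
    (hstable : ∀ f ∈ E, ∀ k ∈ K, f ∘ k ∈ K) : IsMinLeftIdealIn E K :=
  ⟨⟨hK.1.1, hK.1.2.1.trans hSE, hstable⟩, fun L hL hLK ↦
    hK.2 L ⟨hL.1, hLK.trans hK.1.2.1, fun f hf ↦ hL.2.2 f (hSE hf)⟩ hLK⟩

theorem IsIdealIn.isLeftIdealIn (hK : IsIdealIn S K) : IsLeftIdealIn S K :=
  ⟨hK.1, hK.2.1, fun f hf g hg ↦ (hK.2.2 f hf g hg).1⟩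

theorem IsKernelOf.eq_of_unique (hK : IsKernelOf S K) (hS : IsCompClosed S)
    (hL : IsMinLeftIdealIn S L) (huniq : ∀ L', IsMinLeftIdealIn S L' → L' = L) : K = L := by
  have hideal : IsIdealIn S L := by
    refine ⟨hL.1.1, hL.1.2.1, fun f hf l hl ↦ ⟨hL.1.2.2 f hf l hl, ?_⟩⟩
    rw [← huniq _ (hL.image_comp_right hS hf)]
    exact mem_image_of_mem _ hl
  exact hL.2 K hK.1.isLeftIdealIn (hK.2 L hideal)

end Ideals

section CompactSemigroup

variable {X : Type*} [TopologicalSpace X] {S S₁ S₂ L K₁ K₂ : Set (X → X)}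

theorem IsMinLeftIdealIn.isCompact (hL : IsMinLeftIdealIn S L) (hS : IsCompClosed S)
    (hSc : IsCompact S) : IsCompact L := by
  obtain ⟨f, hf⟩ := hL.1.1
  have hne : S.Nonempty := ⟨f, hL.1.2.1 hf⟩
  rw [← hL.image_comp_right_eq hS (hS.isLeftIdealIn_self hne) hf]
  exact hSc.image (Pi.continuous_precomp f)

theorem isLeftIdealIn_sInter_of_isChain (hSc : IsCompact S) {c : Set (Set (X → X))}
    (hne : c.Nonempty) (hchain : IsChain (· ⊆ ·) c)
    (hc : ∀ L ∈ c, IsClosed L ∧ IsLeftIdealIn S L) :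
    IsLeftIdealIn S (⋂₀ c) := by
  have := hne.to_subtype
  have hchain_superset : IsChain (fun L L' : Set (X → X) ↦ L ⊇ L') c := hchain.symm
  refine ⟨?_, ?_, fun f hf g hg L hL ↦ (hc L hL).2.2.2 f hf g (hg L hL)⟩
  · exact IsCompact.nonempty_sInter_of_directed_nonempty_isCompact_isClosed
      hchain_superset.directedOn (fun L hL ↦ (hc L hL).2.1)
      (fun L hL ↦ hSc.of_isClosed_subset (hc L hL).1 (hc L hL).2.2.1) (fun L hL ↦ (hc L hL).1)
  · obtain ⟨L, hL⟩ := hne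
    exact (sInter_subset_of_mem hL).trans (hc L hL).2.2.1

variable [T2Space X]

theorem IsLeftIdealIn.exists_isMinLeftIdealIn_subset (hL : IsLeftIdealIn S L)
    (hS : IsCompClosed S) (hSc : IsCompact S) : ∃ K ⊆ L, IsMinLeftIdealIn S K := by
  have hprincipal : ∀ g ∈ S, IsClosed ((· ∘ g) '' S) ∧ IsLeftIdealIn S ((· ∘ g) '' S) :=
    fun g hg ↦ ⟨(hSc.image (Pi.continuous_precomp g)).isClosed,
      (hS.isLeftIdealIn_self ⟨g, hg⟩).image_comp_right hS hg⟩
  obtain ⟨f, hf⟩ := hL.1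
  obtain ⟨K, hKf, hK, hKmin⟩ := zorn_superset_nonempty
    {K : Set (X → X) | IsClosed K ∧ IsLeftIdealIn S K}
    (fun c hc hchain hne ↦ ⟨⋂₀ c,
      ⟨isClosed_sInter fun K hK ↦ (hc hK).1,
        isLeftIdealIn_sInter_of_isChain hSc hne hchain fun K hK ↦ hc hK⟩,
      fun K hK ↦ sInter_subset_of_mem hK⟩)
    ((· ∘ f) '' S) (hprincipal f (hL.2.1 hf))
  refine ⟨K, hKf.trans (hL.image_comp_right_subset hf), hK.2, fun L' hL' hsub ↦
    hsub.antisymm ?_⟩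
  obtain ⟨g, hg⟩ := hL'.1
  have hgL' : (· ∘ g) '' S ⊆ L' := hL'.image_comp_right_subset hg
  exact (hKmin (hprincipal g (hL'.2.1 hg)) (hgL'.trans hsub)).trans hgL'

theorem IsMinLeftIdealIn.exists_idempotent (hL : IsMinLeftIdealIn S L) (hS : IsCompClosed S)
    (hSc : IsCompact S) : ∃ u ∈ L, u ∘ u = u := by
  let : Semigroup (X → X) := { mul := (· ∘ ·), mul_assoc := fun _ _ _ ↦ rfl }
  exact exists_idempotent_in_compact_subsemigroup Pi.continuous_precomp L hL.1.1
    (hL.isCompact hS hSc) fun f hf g hg ↦ hL.1.2.2 f (hL.1.2.1 hf) g hg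

theorem isMinLeftIdealIn_union_iff
    (hS₁ : IsCompClosed S₁) (hSc₁ : IsCompact S₁) (hS₂ : IsCompClosed S₂) (hSc₂ : IsCompact S₂)
    (hK₁ : IsMinLeftIdealIn (S₁ ∪ S₂) K₁) (huniq₁ : ∀ L, IsMinLeftIdealIn S₁ L → L = K₁)
    (hK₂ : IsMinLeftIdealIn (S₁ ∪ S₂) K₂) (huniq₂ : ∀ L, IsMinLeftIdealIn S₂ L → L = K₂) :
    IsMinLeftIdealIn (S₁ ∪ S₂) L ↔ L = K₁ ∨ L = K₂ := by
  refine ⟨fun hL ↦ ?_, by rintro (rfl | rfl) <;> assumption⟩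
  have heq {S K : Set (X → X)} (hS : IsCompClosed S) (hSc : IsCompact S) (hSE : S ⊆ S₁ ∪ S₂)
      (hK : IsMinLeftIdealIn (S₁ ∪ S₂) K) (huniq : ∀ L, IsMinLeftIdealIn S L → L = K)
      (hmeet : (L ∩ S).Nonempty) : L = K := by
    obtain ⟨K', hsub, hK'⟩ :=
      (hL.1.inter_subsemigroup hS hSE hmeet).exists_isMinLeftIdealIn_subset hS hSc
    obtain rfl := huniq K' hK'
    exact (hL.2 K' hK.1 (hsub.trans inter_subset_left)).symm
  obtain ⟨f, hf⟩ := hL.1.1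
  rcases hL.1.2.1 hf with hf₁ | hf₂
  · exact Or.inl (heq hS₁ hSc₁ subset_union_left hK₁ huniq₁ ⟨f, hf, hf₁⟩)
  · exact Or.inr (heq hS₂ hSc₂ subset_union_right hK₂ huniq₂ ⟨f, hf, hf₂⟩)

end CompactSemigroup

section Identification

variable {X : Type*} {S L L' K : Set (X → X)} {u : X → X} {x y : X}

/-- Some member of `S` takes the same value at `x` and `y`. For `S` the closure of a set of maps
this is the algebraic form of proximality. -/
def IsIdentifiedBy (S : Set (X → X)) (x y : X) : Prop :=
  ∃ p ∈ S, p x = p y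

theorem IsMinLeftIdealIn.apply_eq_of_isIdentifiedBy (hL : IsMinLeftIdealIn S L)
    (hS : IsCompClosed S) (hu : u ∈ L) (h : IsIdentifiedBy S (u x) (u y)) : u x = u y := by
  obtain ⟨q, hq, hqxy⟩ := h
  have hqu : q ∘ u ∈ L := hL.1.2.2 q hq u hu
  obtain ⟨r, -, hr : r ∘ q ∘ u = u⟩ :=
    (hL.image_comp_right_eq hS (hS.isLeftIdealIn_self ⟨q, hq⟩) hqu).ge hu
  calc u x = r (q (u x)) := (congrFun hr x).symm
    _ = r (q (u y)) := congrArg r hqxy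
    _ = u y := congrFun hr y

theorem IsMinLeftIdealIn.apply_eq_of_unique (hL : IsMinLeftIdealIn S L) (hS : IsCompClosed S)
    (huniq : ∀ L', IsMinLeftIdealIn S L' → L' = L) (hu : u ∈ L) (h : IsIdentifiedBy S x y) :
    u x = u y := by
  obtain ⟨p, hp, hpxy⟩ := h
  obtain ⟨l, -, rfl⟩ := (huniq _ (hL.image_comp_right hS hp)).ge hu
  exact congrArg l hpxy

theorem IsMinLeftIdealIn.isTrans_isIdentifiedBy_of_unique (hL : IsMinLeftIdealIn S L)
    (hS : IsCompClosed S) (huniq : ∀ L', IsMinLeftIdealIn S L' → L' = L) :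
    IsTrans X (IsIdentifiedBy S) := by
  refine ⟨fun x y z hxy hyz ↦ ?_⟩
  obtain ⟨l, hl⟩ := hL.1.1
  exact ⟨l, hL.1.2.1 hl, (hL.apply_eq_of_unique hS huniq hl hxy).trans
    (hL.apply_eq_of_unique hS huniq hl hyz)⟩

variable [TopologicalSpace X] [T2Space X]

theorem IsMinLeftIdealIn.eq_of_isTrans (hL : IsMinLeftIdealIn S L)
    (hL' : IsMinLeftIdealIn S L') (hS : IsCompClosed S) (hSc : IsCompact S)
    (htrans : IsTrans X (IsIdentifiedBy S)) : L = L' := by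
  obtain ⟨u, hu, huu⟩ := hL.exists_idempotent hS hSc
  obtain ⟨w, hw, hwu : w ∘ u = u⟩ := (hL.image_comp_right_eq hS hL'.1 hu).ge hu
  have huS : u ∈ S := hL.1.2.1 hu
  have huw : u ∘ w ∈ L' := hL'.1.2.2 u huS w hw
  have huw_idem : (u ∘ w) ∘ u ∘ w = u ∘ w :=
    calc (u ∘ w) ∘ u ∘ w = u ∘ (w ∘ u) ∘ w := rfl
      _ = (u ∘ u) ∘ w := by rw [hwu]; rfl
      _ = u ∘ w := by rw [huu]
  have hu_eq : u = u ∘ w := by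
    funext x
    have hux : IsIdentifiedBy S (u x) x := ⟨u, huS, congrFun huu x⟩
    have hxuw : IsIdentifiedBy S x (u (w x)) :=
      ⟨u ∘ w, hL'.1.2.1 huw, (congrFun huw_idem x).symm⟩
    exact hL.apply_eq_of_isIdentifiedBy hS hu (htrans.trans _ _ _ hux hxuw)
  exact hL.eq_of_inter_nonempty hL' ⟨u, hu, hu_eq ▸ huw⟩

theorem IsKernelOf.isMinLeftIdealIn_of_isTrans (hK : IsKernelOf S K) (hS : IsCompClosed S)
    (hSc : IsCompact S) (htrans : IsTrans X (IsIdentifiedBy S)) : IsMinLeftIdealIn S K := by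
  obtain ⟨L, -, hL⟩ := hK.1.isLeftIdealIn.exists_isMinLeftIdealIn_subset hS hSc
  have hKL : K = L :=
    hK.eq_of_unique hS hL fun _ hL' ↦ hL'.eq_of_isTrans hL hS hSc htrans
  exact hKL ▸ hL

end Identification

section Closure

variable {X : Type*} [TopologicalSpace X] {T K : Set (X → X)}

theorem IsCompClosed.isCompClosed_closure (hT : IsCompClosed T) (hcont : ∀ f ∈ T, Continuous f) :
    IsCompClosed (closure T) := by
  have hleft : ∀ f ∈ T, ∀ g ∈ closure T, f ∘ g ∈ closure T := fun f hf g hg ↦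
    map_mem_closure (Pi.continuous_postcomp (hcont f hf)) hg (hT f hf)
  exact fun f hf g hg ↦ closure_minimal (fun f hf ↦ hleft f hf g hg)
    (isClosed_closure.preimage (Pi.continuous_precomp g)) hf

theorem comp_mem_of_mem_closure (hK : IsClosed K) (hT : ∀ f ∈ T, ∀ k ∈ K, f ∘ k ∈ K) :
    ∀ f ∈ closure T, ∀ k ∈ K, f ∘ k ∈ K :=
  fun _ hf k hk ↦ closure_minimal (fun f hf ↦ hT f hf k hk)
    (hK.preimage (Pi.continuous_precomp k)) hf

end Closure

section Proximality

variable {X : Type*} [UniformSpace X]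

/-- Proximality of `x` and `y` under a set `T` of self-maps of a uniform space: members of `T` bring
the two points arbitrarily close. -/
def IsProximalUnder (T : Set (X → X)) (x y : X) : Prop :=
  ∀ V ∈ 𝓤 X, ∃ t ∈ T, (t x, t y) ∈ V

theorem isProximalUnder_eq_isIdentifiedBy_closure [CompactSpace X] [T2Space X]
    (T : Set (X → X)) : IsProximalUnder T = IsIdentifiedBy (closure T) := by
  ext x y
  have hcont : Continuous fun f : X → X ↦ (f x, f y) := by fun_prop
  constructor
  · intro hprox
    by_contra hne
    have hclosed : IsClosed ((fun f : X → X ↦ (f x, f y)) '' closure T) :=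
      (isClosed_closure.isCompact.image hcont).isClosed
    have hdiag : diagonal X ⊆ ((fun f : X → X ↦ (f x, f y)) '' closure T)ᶜ := by
      rintro ⟨a, b⟩ (rfl : a = b) ⟨p, hp, heq⟩
      exact hne ⟨p, hp, (congrArg Prod.fst heq).trans (congrArg Prod.snd heq).symm⟩
    have hentourage := hclosed.isOpen_compl.mem_nhdsSet.2 hdiag
    rw [nhdsSet_diagonal_eq_uniformity] at hentourage
    obtain ⟨t, ht, htV⟩ := hprox _ hentourage
    exact htV ⟨t, subset_closure ht, rfl⟩
  · rintro ⟨p, hp, hpxy⟩ V hV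
    have hnhds : V ∈ 𝓝 (p x, p y) := 
      hpxy ▸ nhds_le_uniformity (p x) hV
    obtain ⟨t, htV, ht⟩ := mem_closure_iff_nhds.1 hp _ (hcont.continuousAt hnhds)
    exact ⟨t, ht, htV⟩

theorem isProximalUnder_iff_dist {Y : Type*} [PseudoMetricSpace Y] {T : Set (Y → Y)} {x y : Y} :
    IsProximalUnder T x y ↔ ∀ ε > 0, ∃ t ∈ T, dist (t x) (t y) < ε :=
  Metric.uniformity_basis_dist.forall_iff fun _ _ hVW ⟨t, ht, htV⟩ ↦ ⟨t, ht, hVW htV⟩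

end Proximality

section Iterates

variable {X : Type*}

/-- The forward semiorbit of `f` in the self-maps of `X`, whose closure is `E⁺` for `f = α` and `E⁻`
for `f = α.symm`. -/
def iterates (f : X → X) : Set (X → X) :=
  {h | ∃ n : ℕ, h = f^[n]}

theorem isCompClosed_iterates (f : X → X) : IsCompClosed (iterates f) := by
  rintro _ ⟨m, rfl⟩ _ ⟨n, rfl⟩
  exact ⟨m + n, (Function.iterate_add f m n).symm⟩

theorem iterate_comp_mem {K : Set (X → X)} {g : X → X} (hg : ∀ k ∈ K, g ∘ k ∈ K) :
    ∀ f ∈ iterates g, ∀ k ∈ K, f ∘ k ∈ K := by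
  rintro _ ⟨n, rfl⟩ k hk
  induction n with
  | zero => exact hk
  | succ n ih =>
    rw [Function.iterate_succ', Function.comp_assoc]
    exact hg _ ih

variable [TopologicalSpace X]

theorem isCompClosed_closure_iterates {f : X → X} (hf : Continuous f) :
    IsCompClosed (closure (iterates f)) :=
  (isCompClosed_iterates f).isCompClosed_closure <| by
    rintro _ ⟨n, rfl⟩
    exact hf.iterate n

theorem comp_comm_of_mem_closure_iterates [T2Space X] {f g : X → X} (hf : Continuous f)
    (hg : g ∈ closure (iterates f)) : g ∘ f = f ∘ g := by
  refine closure_minimal ?_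
    (isClosed_eq (Pi.continuous_precomp f) (Pi.continuous_postcomp hf)) hg
  rintro _ ⟨n, rfl⟩
  exact (Function.iterate_succ f n).symm.trans (Function.iterate_succ' f n)

/-- The full orbit of `α` in the self-maps of `X`, whose closure is `E`. -/
def intIterates (α : X ≃ₜ X) : Set (X → X) :=
  {h | ∃ n : ℤ, h = zIter α n}

theorem zIter_neg_natCast (α : X ≃ₜ X) (n : ℕ) : zIter α (-n) = α.symm^[n] := by
  rcases n.eq_zero_or_pos with rfl | hn
  · rfl
  · simp [zIter, hn.ne']

theorem intIterates_eq_union (α : X ≃ₜ X) :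
    intIterates α = iterates α ∪ iterates α.symm := by
  ext f
  constructor
  · rintro ⟨n, rfl⟩
    unfold zIter
    split_ifs
    · exact Or.inl ⟨_, rfl⟩
    · exact Or.inr ⟨_, rfl⟩
  · rintro (⟨n, rfl⟩ | ⟨n, rfl⟩)
    · exact ⟨n, by simp [zIter]⟩
    · exact ⟨-n, (zIter_neg_natCast α n).symm⟩

theorem closure_intIterates_eq_union (α : X ≃ₜ X) :
    closure (intIterates α) = closure (iterates α) ∪ closure (iterates α.symm) := by
  rw [intIterates_eq_union, closure_union]

theorem zIter_eq_coe_zpow (α : X ≃ₜ X) (n : ℤ) : zIter α n = ⇑(α ^ n) := by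
  have hpow (β : X ≃ₜ X) (m : ℕ) : ⇑(β ^ m) = β^[m] := hom_coe_pow _ rfl (fun _ _ ↦ rfl) β m
  obtain ⟨m, rfl | rfl⟩ := n.eq_nat_or_neg
  · simp [zIter, hpow]
  · rw [zIter_neg_natCast, zpow_neg, zpow_natCast, ← inv_pow, hpow]
    rfl

theorem isCompClosed_closure_intIterates (α : X ≃ₜ X) :
    IsCompClosed (closure (intIterates α)) := by
  refine IsCompClosed.isCompClosed_closure ?_ ?_
  · rintro _ ⟨m, rfl⟩ _ ⟨n, rfl⟩
    refine ⟨m + n, ?_⟩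
    simp only [zIter_eq_coe_zpow, zpow_add]
    rfl
  · rintro _ ⟨n, rfl⟩
    rw [zIter_eq_coe_zpow]
    exact (α ^ n).continuous

variable [T2Space X] {α : X ≃ₜ X} {K : Set (X → X)}

theorem IsMinLeftIdealIn.symm_comp_mem (hK : IsMinLeftIdealIn (closure (iterates α)) K) :
    ∀ k ∈ K, α.symm ∘ k ∈ K := by
  have hα : ⇑α ∈ closure (iterates α) := subset_closure ⟨1, rfl⟩
  have hinvariant : (α ∘ ·) '' K = K :=
    hK.image_comp_left_eq hα fun _ ↦ comp_comm_of_mem_closure_iterates α.continuous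
  intro k hk
  obtain ⟨l, hl, rfl⟩ := hinvariant.ge hk
  simpa [← Function.comp_assoc] using hl

theorem IsMinLeftIdealIn.union_closure_iterates_symm [CompactSpace X]
    (hK : IsMinLeftIdealIn (closure (iterates α)) K) :
    IsMinLeftIdealIn (closure (iterates α) ∪ closure (iterates α.symm)) K := by
  refine hK.of_subset subset_union_left ?_
  rintro f (hf | hf)
  · exact hK.1.2.2 f hf
  · have hclosed : IsClosed K :=
      (hK.isCompact (isCompClosed_closure_iterates α.continuous)
        isClosed_closure.isCompact).isClosed
    exact comp_mem_of_mem_closure hclosed (iterate_comp_mem hK.symm_comp_mem) f hf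

end Iterates

section Dichotomy

variable {X : Type*} [UniformSpace X] [CompactSpace X] [T2Space X] {K : Set (X → X)}

theorem IsKernelOf.isMinLeftIdealIn_closure_iterates {f : X → X} (hf : Continuous f)
    (htrans : IsTrans X (IsProximalUnder (iterates f)))
    (hK : IsKernelOf (closure (iterates f)) K) : IsMinLeftIdealIn (closure (iterates f)) K :=
  hK.isMinLeftIdealIn_of_isTrans (isCompClosed_closure_iterates hf) isClosed_closure.isCompact
    (isProximalUnder_eq_isIdentifiedBy_closure (iterates f) ▸ htrans)

theorem isMinLeftIdealIn_closure_intIterates_iff {α : X ≃ₜ X} {L Mp Mm : Set (X → X)}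
    (hfwd : IsTrans X (IsProximalUnder (iterates α)))
    (hbwd : IsTrans X (IsProximalUnder (iterates α.symm)))
    (hMp : IsKernelOf (closure (iterates α)) Mp) (hMm : IsKernelOf (closure (iterates α.symm)) Mm) :
    IsMinLeftIdealIn (closure (intIterates α)) L ↔ L = Mp ∨ L = Mm := by
  have hminp := hMp.isMinLeftIdealIn_closure_iterates α.continuous hfwd
  have hminm := hMm.isMinLeftIdealIn_closure_iterates α.symm.continuous hbwd
  have hSp := isCompClosed_closure_iterates α.continuous
  have hSm := isCompClosed_closure_iterates α.symm.continuous
  have hcompact (T : Set (X → X)) : IsCompact (closure T) := isClosed_closure.isCompact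
  have hminm' := hminm.union_closure_iterates_symm
  rw [Homeomorph.symm_symm, union_comm] at hminm'
  rw [isProximalUnder_eq_isIdentifiedBy_closure] at hfwd hbwd
  rw [closure_intIterates_eq_union]
  exact isMinLeftIdealIn_union_iff hSp (hcompact _) hSm (hcompact _)
    hminp.union_closure_iterates_symm (fun _ hL ↦ hL.eq_of_isTrans hminp hSp (hcompact _) hfwd)
    hminm' (fun _ hL ↦ hL.eq_of_isTrans hminm hSm (hcompact _) hbwd)

theorem stmt_10_general (α : X ≃ₜ X)
    (hfwd : IsTrans X (IsProximalUnder (iterates α)))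
    (hbwd : IsTrans X (IsProximalUnder (iterates α.symm)))
    (M Mp Mm : Set (X → X)) (hM : IsKernelOf (closure (intIterates α)) M)
    (hMp : IsKernelOf (closure (iterates α)) Mp)
    (hMm : IsKernelOf (closure (iterates α.symm)) Mm) :
    (IsTrans X (IsProximalUnder (intIterates α)) ∧
      (∃! L, IsMinLeftIdealIn (closure (intIterates α)) L) ∧ M = Mp ∧ M = Mm) ∨
    (¬IsTrans X (IsProximalUnder (intIterates α)) ∧ Mp ∩ Mm = ∅ ∧
      ∀ L, IsMinLeftIdealIn (closure (intIterates α)) L ↔ L = Mp ∨ L = Mm) := by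
  have hE := isCompClosed_closure_intIterates α
  have hiff (L) : IsMinLeftIdealIn (closure (intIterates α)) L ↔ L = Mp ∨ L = Mm :=
    isMinLeftIdealIn_closure_intIterates_iff hfwd hbwd hMp hMm
  have hMpE := (hiff Mp).2 (Or.inl rfl)
  have hMmE := (hiff Mm).2 (Or.inr rfl)
  rw [isProximalUnder_eq_isIdentifiedBy_closure]
  rcases eq_or_ne Mp Mm with rfl | hne
  · have huniq (L) (hL : IsMinLeftIdealIn (closure (intIterates α)) L) : L = Mp :=
      or_self_iff.1 ((hiff L).1 hL)
    have hMeq : M = Mp := hM.eq_of_unique hE hMpE huniq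
    exact Or.inl ⟨hMpE.isTrans_isIdentifiedBy_of_unique hE huniq, ⟨Mp, hMpE, huniq⟩, hMeq, hMeq⟩
  · refine Or.inr ⟨fun htrans ↦ hne ?_, ?_, hiff⟩
    · exact hMpE.eq_of_isTrans hMmE hE isClosed_closure.isCompact htrans
    · exact not_nonempty_iff_eq_empty.1 fun hmeet ↦ hne (hMpE.eq_of_inter_nonempty hMmE hmeet)

end Dichotomy

section Metric

variable {X : Type*} [MetricSpace X]

theorem isTrans_isProximalUnder_iterates_iff (f : X → X) :
    IsTrans X (IsProximalUnder (iterates f)) ↔ ∀ x y z : X,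
      (∀ ε > 0, ∃ n : ℕ, dist (f^[n] x) (f^[n] y) < ε) →
      (∀ ε > 0, ∃ n : ℕ, dist (f^[n] y) (f^[n] z) < ε) →
      (∀ ε > 0, ∃ n : ℕ, dist (f^[n] x) (f^[n] z) < ε) := by
  have hdist (x y : X) : IsProximalUnder (iterates f) x y ↔
      ∀ ε > 0, ∃ n : ℕ, dist (f^[n] x) (f^[n] y) < ε := by
    rw [isProximalUnder_iff_dist]
    simp [iterates]
  simp only [← hdist]
  exact ⟨fun h ↦ h.trans, fun h ↦ ⟨h⟩⟩

theorem isTrans_isProximalUnder_intIterates_iff (α : X ≃ₜ X) :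
    IsTrans X (IsProximalUnder (intIterates α)) ↔
      ∀ x y z : X, ZProx α x y → ZProx α y z → ZProx α x z := by
  have hdist (x y : X) : IsProximalUnder (intIterates α) x y ↔ ZProx α x y := by
    rw [isProximalUnder_iff_dist]
    simp [intIterates, ZProx]
  simp only [← hdist]
  exact ⟨fun h ↦ h.trans, fun h ↦ ⟨h⟩⟩

end Metric

/-- If forward and backward proximality are transitive, then either
proximality is transitive, `E` has a unique minimal left ideal and `M = M⁺ = M⁻`, or
proximality is not transitive, `M⁺ ∩ M⁻ = ∅` and `M⁺`, `M⁻` are precisely the minimal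
left ideals of `E`. -/
theorem stmt_10 {X : Type*} [MetricSpace X] [CompactSpace X] (α : X ≃ₜ X)
    (hfwd : ∀ x y z : X,
      (∀ ε > 0, ∃ n : ℕ, dist ((⇑α)^[n] x) ((⇑α)^[n] y) < ε) →
      (∀ ε > 0, ∃ n : ℕ, dist ((⇑α)^[n] y) ((⇑α)^[n] z) < ε) →
      (∀ ε > 0, ∃ n : ℕ, dist ((⇑α)^[n] x) ((⇑α)^[n] z) < ε))
    (hbwd : ∀ x y z : X,
      (∀ ε > 0, ∃ n : ℕ, dist ((⇑α.symm)^[n] x) ((⇑α.symm)^[n] y) < ε) →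
      (∀ ε > 0, ∃ n : ℕ, dist ((⇑α.symm)^[n] y) ((⇑α.symm)^[n] z) < ε) →
      (∀ ε > 0, ∃ n : ℕ, dist ((⇑α.symm)^[n] x) ((⇑α.symm)^[n] z) < ε))
    (M Mp Mm : Set (X → X))
    (hM : IsKernelOf (closure {h : X → X | ∃ n : ℤ, h = zIter α n}) M)
    (hMp : IsKernelOf (closure {h : X → X | ∃ n : ℕ, h = (⇑α)^[n]}) Mp)
    (hMm : IsKernelOf (closure {h : X → X | ∃ n : ℕ, h = (⇑α.symm)^[n]}) Mm) :
    ((∀ x y z : X, ZProx α x y → ZProx α y z → ZProx α x z) ∧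
      (∃! L : Set (X → X),
        IsMinLeftIdealIn (closure {h : X → X | ∃ n : ℤ, h = zIter α n}) L) ∧
      M = Mp ∧ M = Mm) ∨
    ((¬∀ x y z : X, ZProx α x y → ZProx α y z → ZProx α x z) ∧
      Mp ∩ Mm = ∅ ∧
      (∀ L : Set (X → X),
        IsMinLeftIdealIn (closure {h : X → X | ∃ n : ℤ, h = zIter α n}) L ↔
          (L = Mp ∨ L = Mm))) := by
  rw [← isTrans_isProximalUnder_intIterates_iff]
  exact stmt_10_general α ((isTrans_isProximalUnder_iterates_iff α).2 hfwd)
    ((isTrans_isProximalUnder_iterates_iff α.symm).2 hbwd) M Mp Mm hM hMp hMm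
end
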